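/- Let (E, λ) be a training set in ℝ^d and T a decision tree for (E, λ). For reals ℓ_i ≤ r_i (i ∈ {1,…,d}) let E[(ℓ_i,r_i)] = {e ∈ E : ℓ_i < e[i] ≤ r_i for all i}. For a node v of T and integer k' ≥ 0, let Q[v,(ℓ_i,r_i),k'] be the minimum number of examples of E[(ℓ_i,r_i)] misclassified by a tree obtained from the subtree T_v by subtree raising operations pruning at least k' inner nodes in total (the minimum over an empty set being +∞). Then: (i) for every leaf v, Q[v,(ℓ_i,r_i),0] equals the number of examples of E[(ℓ_i,r_i)] whose label differs from the label of v, and Q[v,(ℓ_i,r_i),k'] = +∞ for k' ≥ 1; (ii) for every inner node v with left child u and right child w, letting s_u, s_w be the numbers of inner nodes of T_u, T_w, Q[v,(ℓ_i,r_i),k'] = min( Q[u,(ℓ_i,r_i), max(0, k'−s_w−1)], Q[w,(ℓ_i,r_i), max(0, k'−s_u−1)], min over 0 ≤ k'' ≤ k' of Q[u,(ℓ_i,r_i^u),k''] + Q[w,(ℓ_i^w,r_i),k'−k''] ), where r_i^u = r_i and ℓ_i^w = ℓ_i for i ≠ feat(v), r^u_{feat(v)} = min{r_{feat(v)}, thr(v)},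 and ℓ^w_{feat(v)} = max{ℓ_{feat(v)}, thr(v)}. -/

import Mathlib

/-- The two class labels. -/
inductive Label where
  | blue
  | red
deriving DecidableEq

/-- A decision tree over examples `ι → ℝ` with classes `{blue, red}`:
every inner node carries a feature and a threshold, every leaf a class label.
An example goes to the left child if its value in the node's feature is at most
the threshold, and to the right child otherwise. -/
inductive DTree (ι : Type) where
  | leaf (c : Label)
  | node (feat : ι) (thr : ℝ) (left right : DTree ι)

namespace DTree

variable {ι : Type}

/-- The class that a decision tree assigns to an example. -/
noncomputable def classify : DTree ι → (ι → ℝ) → Label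
  | .leaf c, _ => c
  | .node f t l r, e => if e f ≤ t then l.classify e else r.classify e

/-- The routing path of an example (`false` = left child, `true` = right child);
it is the position of the leaf of the example. -/
noncomputable def route : DTree ι → (ι → ℝ) → List Bool
  | .leaf _, _ => []
  | .node f t l r, e => if e f ≤ t then false :: l.route e else true :: r.route e

/-- The subtree rooted at a position (`none` if the position is not a node). -/
def subtreeAt : DTree ι → List Bool → Option (DTree ι)
  | T, [] => some T
  | .leaf _, _ :: _ => none
  | .node _ _ l r, b :: p => (if b then r else l).subtreeAt p

/-- Replace the subtree at a given position by another tree. -/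
def replaceAt : DTree ι → List Bool → DTree ι → DTree ι
  | _, [], T' => T'
  | .leaf c, _ :: _, _ => .leaf c
  | .node f t l r, b :: p, T' =>
      if b then .node f t l (r.replaceAt p T') else .node f t (l.replaceAt p T') r

/-- The number of inner nodes of a decision tree. -/
def innerCount : DTree ι → ℕ
  | .leaf _ => 0
  | .node _ _ l r => 1 + l.innerCount + r.innerCount

/-- The position `p` is an inner node of `T`. -/
def IsInnerPos (T : DTree ι) (p : List Bool) : Prop :=
  ∃ f t l r, T.subtreeAt p = some (.node f t l r)

/-- The position `p` is a node of `T`. -/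
def IsNodePos (T : DTree ι) (p : List Bool) : Prop :=
  (T.subtreeAt p).isSome

/-- The feature and threshold of the inner node at position `p`. -/
def cutAt (T : DTree ι) (p : List Bool) : Option (ι × ℝ) :=
  match T.subtreeAt p with
  | some (.node f t _ _) => some (f, t)
  | _ => none

/-- The subtree raising operation at position `q` keeping the child in direction `b`:
the subtree rooted at `q` is replaced by the subtree rooted at its `b`-child; it prunes
the node at `q` together with all inner nodes of the subtree rooted at the other child. -/
def raiseAt (T : DTree ι) (q : List Bool) (b : Bool) : DTree ι :=
  match T.subtreeAt q with
  | some (.node _ _ l r) => T.replaceAt q (if b then r else l)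
  | _ => T

end DTree

/-- `E[T,p]`: the examples of `E` whose routing through `T` passes the position `p`. -/
noncomputable def reach {ι : Type} (E : Finset (ι → ℝ)) (T : DTree ι) (p : List Bool) :
    Finset (ι → ℝ) :=
  E.filter fun e => p <+: T.route e

/-- The number of errors of `T` on the training set `(E, lab)`. -/
noncomputable def errCount {ι : Type} (T : DTree ι) (E : Finset (ι → ℝ))
    (lab : (ι → ℝ) → Label) : ℕ :=
  (E.filter fun e => T.classify e ≠ lab e).card

/-- A most frequent label of the labeled set `(E, lab)` (blue in case of a tie). -/
def majorityLabel {ι : Type} (E : Finset (ι → ℝ)) (lab : (ι → ℝ) → Label) : Label :=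
  if (E.filter fun e => lab e = Label.red).card ≤ (E.filter fun e => lab e = Label.blue).card
  then Label.blue else Label.red

/-- One subtree replacement operation: some inner node of `T` is replaced by a leaf
labeled with a most frequent label of the examples reaching it. -/
def ReplStep {ι : Type} (E : Finset (ι → ℝ)) (lab : (ι → ℝ) → Label)
    (T T' : DTree ι) : Prop :=
  ∃ p, T.IsInnerPos p ∧
    T' = T.replaceAt p (.leaf (majorityLabel (reach E T p) lab))

/-- `T` is a reasonable decision tree for `(E, lab)`: every node is reached by some
example and every leaf carries a most frequent label of the examples reaching it. -/
def Reasonable {ι : Type} (E : Finset (ι → ℝ)) (lab : (ι → ℝ) → Label)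
    (T : DTree ι) : Prop :=
  (∀ p, T.IsNodePos p → (reach E T p).Nonempty) ∧
  (∀ p c, T.subtreeAt p = some (.leaf c) → ∀ c' : Label,
    ((reach E T p).filter fun e => lab e = c').card ≤
      ((reach E T p).filter fun e => lab e = c).card)

/-- Apply a sequence of raising operations (given by positions and kept directions). -/
def applySeq {ι : Type} : DTree ι → List (List Bool × Bool) → DTree ι
  | T, [] => T
  | T, (q, b) :: rest => applySeq (T.raiseAt q b) rest

/-- Each raising operation of the sequence is applied at an inner node. -/
def ValidSeq {ι : Type} : DTree ι → List (List Bool × Bool) → Prop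
  | _, [] => True
  | T, (q, b) :: rest => T.IsInnerPos q ∧ ValidSeq (T.raiseAt q b) rest

/-- The total number of inner nodes pruned by a sequence of raising operations. -/
def seqPruned {ι : Type} : DTree ι → List (List Bool × Bool) → ℕ
  | _, [] => 0
  | T, (q, b) :: rest =>
      (match T.subtreeAt q with
        | some (.node _ _ l r) => 1 + DTree.innerCount (if b then l else r)
        | _ => 0) + seqPruned (T.raiseAt q b) rest

/-- `T'` is obtained from `T` by a (possibly empty) sequence of subtree raising
operations. -/
def RaisedFrom {ι : Type} (T T' : DTree ι) : Prop :=
  ∃ steps, ValidSeq T steps ∧ applySeq T steps = T'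

/-- `T'` is obtained from `T` by a sequence of subtree raising operations pruning
exactly `m` inner nodes in total. -/
def RaisedFromPruning {ι : Type} (T : DTree ι) (m : ℕ) (T' : DTree ι) : Prop :=
  ∃ steps, ValidSeq T steps ∧ seqPruned T steps = m ∧ applySeq T steps = T'

/-- Tracking the position of a node through one raising operation: nodes strictly
below the raised node on the discarded side, and the raised node itself, are pruned
(`none`); all other nodes survive at a possibly shifted position. -/
def stepMap (q : List Bool) (b : Bool) (p : List Bool) : Option (List Bool) :=
  if q <+: p then
    if q ++ [b] <+: p then some (q ++ p.drop (q.length + 1)) else none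
  else some p

/-- Tracking the position of a node through a sequence of raising operations. -/
def seqMap : List (List Bool × Bool) → List Bool → Option (List Bool)
  | [], p => some p
  | (q, b) :: rest, p => (stepMap q b p).bind (seqMap rest)

/-- The number of errors of `T` on a multiset of labeled examples. -/
noncomputable def errCountM {ι : Type} (T : DTree ι) (E : Multiset ((ι → ℝ) × Label)) : ℕ :=
  (E.filter fun q => T.classify q.1 ≠ q.2).card

/-- `Qval E lab T lo hi k`: the minimum (in `ℕ∞`, so `⊤` if no tree qualifies)
number of misclassified examples among the examples of `E` in the box
`{e | ∀ i, lo i < e i ≤ hi i}`, over all trees obtained from `T` by subtree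
raising operations pruning at least `k` inner nodes in total. -/
noncomputable def Qval {d : ℕ} (E : Finset (Fin d → ℝ)) (lab : (Fin d → ℝ) → Label)
    (T : DTree (Fin d)) (lo hi : Fin d → ℝ) (k : ℕ) : ℕ∞ :=
  sInf {x : ℕ∞ | ∃ T' m, k ≤ m ∧ RaisedFromPruning T m T' ∧
    x = (errCount T' (E.filter fun e => ∀ i, lo i < e i ∧ e i ≤ hi i) lab : ℕ∞)}

/-! Raising operations act locally: one inside a subtree of a node commutes with the node, and one
at the node leaves one of its two children. Hence a tree raised from `node f t u w` is raised from
`u`, or from `w`, or is `node f t u' w'` with `u'` raised from `u` and `w'` raised from `w`. The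
number of inner nodes pruned on the way is the difference of the two node counts, so it need not
be tracked along the sequence. The sets of candidate trees thus satisfy a recurrence, and the one
for the minimum number of errors is its image: a tree `node f t u' w'` sends the examples with
`e f ≤ t` to `u'` and the others to `w'`. -/

namespace DTree

variable {ι : Type} {T S u w : DTree ι} {f : ι} {t : ℝ} {c : Label} {q : List Bool} {b : Bool}

theorem not_isInnerPos_leaf : ¬ (leaf c : DTree ι).IsInnerPos q := by
  rintro ⟨f, t, l, r, h⟩
  cases q <;> simp [subtreeAt] at h

theorem raiseAt_false_cons :
    (node f t u w).raiseAt (false :: q) b = node f t (u.raiseAt q b) w := by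
  simp only [raiseAt, subtreeAt, replaceAt, Bool.false_eq_true, if_false]
  split <;> rfl

theorem raiseAt_true_cons :
    (node f t u w).raiseAt (true :: q) b = node f t u (w.raiseAt q b) := by
  simp only [raiseAt, subtreeAt, replaceAt, if_true]
  split <;> rfl

/-- `RaiseStep T S`: the tree `S` arises from `T` by a single subtree raising operation, described
by recursion on `T` instead of by the position of the operation. -/
inductive RaiseStep : DTree ι → DTree ι → Prop
  | left (f : ι) (t : ℝ) (u w : DTree ι) : RaiseStep (node f t u w) u
  | right (f : ι) (t : ℝ) (u w : DTree ι) : RaiseStep (node f t u w) w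
  | inLeft {u u' : DTree ι} (f : ι) (t : ℝ) (w : DTree ι) (h : RaiseStep u u') :
      RaiseStep (node f t u w) (node f t u' w)
  | inRight {w w' : DTree ι} (f : ι) (t : ℝ) (u : DTree ι) (h : RaiseStep w w') :
      RaiseStep (node f t u w) (node f t u w')

theorem IsInnerPos.raiseStep (hq : T.IsInnerPos q) (b : Bool) : RaiseStep T (T.raiseAt q b) := by
  induction q generalizing T with
  | nil =>
    obtain ⟨f, t, u, w, ⟨⟩⟩ := hq
    cases b
    · exact .left f t u w
    · exact .right f t u w
  | cons d q ih =>
    cases T with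
    | leaf c => exact absurd hq not_isInnerPos_leaf
    | node f t u w =>
      cases d
      · rw [raiseAt_false_cons]
        exact .inLeft f t w (ih hq)
      · rw [raiseAt_true_cons]
        exact .inRight f t u (ih hq)

theorem RaiseStep.exists_raiseAt (h : RaiseStep T S) :
    ∃ q b, T.IsInnerPos q ∧ T.raiseAt q b = S := by
  induction h with
  | left f t u w => exact ⟨[], false, ⟨f, t, u, w, rfl⟩, rfl⟩
  | right f t u w => exact ⟨[], true, ⟨f, t, u, w, rfl⟩, rfl⟩
  | inLeft f t w _ ih =>
    obtain ⟨q, b, hq, rfl⟩ := ih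
    exact ⟨false :: q, b, hq, raiseAt_false_cons⟩
  | inRight f t u _ ih =>
    obtain ⟨q, b, hq, rfl⟩ := ih
    exact ⟨true :: q, b, hq, raiseAt_true_cons⟩

theorem innerCount_replaceAt_add (hS : T.subtreeAt q = some S) (S' : DTree ι) :
    (T.replaceAt q S').innerCount + S.innerCount = T.innerCount + S'.innerCount := by
  induction q generalizing T with
  | nil =>
    obtain rfl : T = S := Option.some.inj hS
    rw [replaceAt, Nat.add_comm]
  | cons d q ih =>
    cases T with
    | leaf c => cases hS
    | node f t u w =>
      have hd := ih hS
      cases d <;>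
        simp only [replaceAt, innerCount, Bool.false_eq_true, if_true, if_false] at hd ⊢ <;> omega

end DTree

section RaisedFrom

open DTree Relation

variable {ι : Type} {T T' u w : DTree ι} {f : ι} {t : ℝ} {c : Label} {m : ℕ}

theorem raisedFrom_iff_reflTransGen : RaisedFrom T T' ↔ ReflTransGen RaiseStep T T' := by
  constructor
  · rintro ⟨steps, hvalid, rfl⟩
    induction steps generalizing T with
    | nil => exact .refl
    | cons s rest ih => exact .head (hvalid.1.raiseStep s.2) (ih hvalid.2)
  · intro h
    induction h using ReflTransGen.head_induction_on with
    | refl => exact ⟨[], trivial, rfl⟩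
    | head hstep _ ih =>
      obtain ⟨q, b, hq, rfl⟩ := hstep.exists_raiseAt
      obtain ⟨steps, hvalid, hT'⟩ := ih
      exact ⟨(q, b) :: steps, ⟨hq, hvalid⟩, hT'⟩

theorem raisedFrom_leaf_iff : RaisedFrom (.leaf c) T' ↔ T' = .leaf c := by
  rw [raisedFrom_iff_reflTransGen, reflTransGen_iff_eq]
  rintro _ ⟨⟩

theorem raisedFrom_node_iff : RaisedFrom (.node f t u w) T' ↔
    RaisedFrom u T' ∨ RaisedFrom w T' ∨
      ∃ u' w', RaisedFrom u u' ∧ RaisedFrom w w' ∧ .node f t u' w' = T' := by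
  simp only [raisedFrom_iff_reflTransGen]
  constructor
  · generalize hT : DTree.node f t u w = T
    intro h
    induction h using ReflTransGen.head_induction_on generalizing u w with
    | refl => exact .inr (.inr ⟨u, w, .refl, .refl, hT⟩)
    | head hstep hrest ih =>
      subst hT
      cases hstep with
      | left => exact .inl hrest
      | right => exact .inr (.inl hrest)
      | inLeft _ _ _ hu =>
        obtain h | h | ⟨u', w', hu', hw', hT'⟩ := ih rfl
        · exact .inl (.head hu h)
        · exact .inr (.inl h)
        · exact .inr (.inr ⟨u', w', .head hu hu', hw', hT'⟩)
      | inRight _ _ _ hw =>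
        obtain h | h | ⟨u', w', hu', hw', hT'⟩ := ih rfl
        · exact .inl h
        · exact .inr (.inl (.head hw h))
        · exact .inr (.inr ⟨u', w', hu', .head hw hw', hT'⟩)
  · rintro (h | h | ⟨u', w', hu, hw, rfl⟩)
    · exact .head (.left f t u w) h
    · exact .head (.right f t u w) h
    · exact (hu.lift (DTree.node f t · w) fun _ _ h => .inLeft f t w h).trans
        (hw.lift (DTree.node f t u' ·) fun _ _ h => .inRight f t u' h)

theorem innerCount_applySeq_add_seqPruned (T : DTree ι) (steps : List (List Bool × Bool)) :
    (applySeq T steps).innerCount + seqPruned T steps = T.innerCount := by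
  induction steps generalizing T with
  | nil => rfl
  | cons s rest ih =>
    obtain ⟨q, b⟩ := s
    have hrest := ih (T.raiseAt q b)
    simp only [applySeq, seqPruned]
    rcases hS : T.subtreeAt q with _ | _ | ⟨f, t, l, r⟩
    · simp_all [raiseAt]
    · simp_all [raiseAt]
    · have hraise : T.raiseAt q b = T.replaceAt q (if b then r else l) := by
        simp only [raiseAt, hS]
      have hcount := innerCount_replaceAt_add hS (if b then r else l)
      rw [← hraise] at hcount
      cases b <;>
        simp only [innerCount, Bool.false_eq_true, if_true, if_false] at hcount ⊢ <;> omega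

theorem raisedFromPruning_iff :
    RaisedFromPruning T m T' ↔ RaisedFrom T T' ∧ T'.innerCount + m = T.innerCount := by
  constructor
  · rintro ⟨steps, hvalid, rfl, rfl⟩
    exact ⟨⟨steps, hvalid, rfl⟩, innerCount_applySeq_add_seqPruned T steps⟩
  · rintro ⟨⟨steps, hvalid, rfl⟩, hcount⟩
    have := innerCount_applySeq_add_seqPruned T steps
    exact ⟨steps, hvalid, by omega, rfl⟩

theorem RaisedFrom.innerCount_le (h : RaisedFrom T T') : T'.innerCount ≤ T.innerCount := by
  obtain ⟨steps, -, rfl⟩ := h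
  exact (Nat.le_add_right _ _).trans_eq (innerCount_applySeq_add_seqPruned T steps)

end RaisedFrom

section Prunings

open DTree

variable {ι : Type} {T T' : DTree ι} {k : ℕ}

/-- The trees obtained from `T` by subtree raising operations pruning at least `k` inner nodes in
total: the candidates over which the recurrence minimizes. -/
def prunings (T : DTree ι) (k : ℕ) : Set (DTree ι) :=
  {T' | ∃ m, k ≤ m ∧ RaisedFromPruning T m T'}

theorem mem_prunings_iff :
    T' ∈ prunings T k ↔ RaisedFrom T T' ∧ T'.innerCount + k ≤ T.innerCount := by
  simp only [prunings, Set.mem_ofPred_eq, raisedFromPruning_iff]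
  constructor
  · rintro ⟨m, hkm, hT', hcount⟩
    exact ⟨hT', by omega⟩
  · rintro ⟨hT', hcount⟩
    exact ⟨T.innerCount - T'.innerCount, by omega, hT', by omega⟩

theorem prunings_leaf_zero (c : Label) : prunings (.leaf c : DTree ι) 0 = {.leaf c} := by
  ext T'
  rw [mem_prunings_iff, raisedFrom_leaf_iff, Set.mem_singleton_iff, and_iff_left_of_imp]
  rintro rfl
  rfl

theorem prunings_eq_empty (hk : T.innerCount < k) : prunings T k = ∅ := by
  refine Set.eq_empty_of_forall_notMem fun T' hT' => ?_
  have := (mem_prunings_iff.1 hT').2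
  omega

theorem prunings_node (f : ι) (t : ℝ) (u w : DTree ι) (k : ℕ) :
    prunings (.node f t u w) k =
      prunings u (k - (w.innerCount + 1)) ∪ (prunings w (k - (u.innerCount + 1)) ∪
        ⋃ j ∈ Finset.range (k + 1),
          Set.image2 (.node f t) (prunings u j) (prunings w (k - j))) := by
  ext T'
  simp only [Set.mem_union, Set.mem_iUnion, Set.mem_image2, mem_prunings_iff, raisedFrom_node_iff,
    Finset.mem_range, innerCount]
  constructor
  · rintro ⟨hu | hw | ⟨u', w', hu, hw, rfl⟩, hcount⟩
    · have := hu.innerCount_le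
      exact .inl ⟨hu, by omega⟩
    · have := hw.innerCount_le
      exact .inr (.inl ⟨hw, by omega⟩)
    · have hu_le := hu.innerCount_le
      have hw_le := hw.innerCount_le
      rw [innerCount] at hcount
      -- `u'` may have lost more than `k` nodes, hence the cap at `k`; then any `w'` will do.
      exact .inr (.inr ⟨min k (u.innerCount - u'.innerCount), by omega,
        u', ⟨hu, by omega⟩, w', ⟨hw, by omega⟩, rfl⟩)
  · rintro (⟨hu, hcount⟩ | ⟨hw, hcount⟩ | ⟨j, hj, u', ⟨hu, hucount⟩, w', ⟨hw, hwcount⟩, rfl⟩)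
    · exact ⟨.inl hu, by omega⟩
    · exact ⟨.inr (.inl hw), by omega⟩
    · exact ⟨.inr (.inr ⟨u', w', hu, hw, rfl⟩), by rw [innerCount]; omega⟩

end Prunings

section MinErrors

open DTree

variable {ι : Type} (E : Finset (ι → ℝ)) (lab : (ι → ℝ) → Label)

theorem errCount_leaf (c : Label) :
    errCount (.leaf c) E lab = (E.filter fun e => lab e ≠ c).card := by
  simp only [errCount, classify, ne_comm (a := c)]

theorem errCount_node (f : ι) (t : ℝ) (u w : DTree ι) :
    errCount (.node f t u w) E lab =
      errCount u (E.filter fun e => e f ≤ t) lab + errCount w (E.filter fun e => t < e f) lab := by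
  simp only [errCount, ← not_le]
  rw [← Finset.card_filter_add_card_filter_not (fun e : ι → ℝ => e f ≤ t)]
  simp only [Finset.filter_filter]
  congr 2
  · refine Finset.filter_congr fun e _ => ?_
    by_cases h : e f ≤ t <;> simp [classify, h]
  · refine Finset.filter_congr fun e _ => ?_
    by_cases h : e f ≤ t <;> simp [classify, h]

/-- The minimum number of examples of `E` misclassified by a tree obtained from `T` by raising
operations pruning at least `k` inner nodes, with value `⊤` if there is no such tree. It differs
from `Qval` in allowing any finite set of examples instead of the examples in a box. -/
noncomputable def minErrors (T : DTree ι) (k : ℕ) : ℕ∞ :=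
  ⨅ T' ∈ prunings T k, (errCount T' E lab : ℕ∞)

theorem minErrors_leaf_zero (c : Label) :
    minErrors E lab (.leaf c) 0 = ((E.filter fun e => lab e ≠ c).card : ℕ∞) := by
  rw [minErrors, prunings_leaf_zero, iInf_singleton, errCount_leaf]

variable {E lab} in
theorem minErrors_eq_top {T : DTree ι} {k : ℕ} (hk : T.innerCount < k) :
    minErrors E lab T k = ⊤ := by
  rw [minErrors, prunings_eq_empty hk, iInf_emptyset]

theorem iInf_image2_errCount_node (f : ι) (t : ℝ) (U W : Set (DTree ι)) :
    ⨅ T' ∈ Set.image2 (.node f t) U W, (errCount T' E lab : ℕ∞) =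
      (⨅ u ∈ U, (errCount u (E.filter fun e => e f ≤ t) lab : ℕ∞)) +
        ⨅ w ∈ W, (errCount w (E.filter fun e => t < e f) lab : ℕ∞) := by
  simp only [iInf_image2, errCount_node, Nat.cast_add, ENat.iInf₂_add]
  simp only [ENat.add_iInf₂]

end MinErrors

section Box

theorem forall_lt_and_le_update_min_iff {ι α : Type*} [DecidableEq ι] [LinearOrder α]
    {lo hi e : ι → α} {f : ι} {t : α} :
    (∀ i, lo i < e i ∧ e i ≤ Function.update hi f (min (hi f) t) i) ↔
      (∀ i, lo i < e i ∧ e i ≤ hi i) ∧ e f ≤ t := by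
  have hmin (i : ι) : e i ≤ Function.update hi f (min (hi f) t) i ↔
      e i ≤ hi i ∧ (i = f → e f ≤ t) := by
    obtain rfl | hne := eq_or_ne i f <;> simp [*]
  simp only [hmin, forall_and, forall_eq, and_assoc]

theorem forall_update_max_lt_and_le_iff {ι α : Type*} [DecidableEq ι] [LinearOrder α]
    {lo hi e : ι → α} {f : ι} {t : α} :
    (∀ i, Function.update lo f (max (lo f) t) i < e i ∧ e i ≤ hi i) ↔
      (∀ i, lo i < e i ∧ e i ≤ hi i) ∧ t < e f := by
  have hmax (i : ι) : Function.update lo f (max (lo f) t) i < e i ↔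
      lo i < e i ∧ (i = f → t < e f) := by
    obtain rfl | hne := eq_or_ne i f <;> simp [*]
  simp only [hmax, forall_and, forall_eq, and_right_comm]

variable {d : ℕ} (E : Finset (Fin d → ℝ)) (lab : (Fin d → ℝ) → Label) (lo hi : Fin d → ℝ)

/-- `E[(ℓ,r)]`, the examples of `E` in the half-open box `{e | ∀ i, lo i < e i ≤ hi i}`. -/
noncomputable def boxExamples : Finset (Fin d → ℝ) :=
  E.filter fun e => ∀ i, lo i < e i ∧ e i ≤ hi i

theorem boxExamples_filter_le (f : Fin d) (t : ℝ) :
    ((boxExamples E lo hi).filter fun e => e f ≤ t) =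
      boxExamples E lo (Function.update hi f (min (hi f) t)) := by
  simp only [boxExamples, Finset.filter_filter, forall_lt_and_le_update_min_iff]

theorem boxExamples_filter_lt (f : Fin d) (t : ℝ) :
    ((boxExamples E lo hi).filter fun e => t < e f) =
      boxExamples E (Function.update lo f (max (lo f) t)) hi := by
  simp only [boxExamples, Finset.filter_filter, forall_update_max_lt_and_le_iff]

theorem Qval_eq_minErrors (T : DTree (Fin d)) (k : ℕ) :
    Qval E lab T lo hi k = minErrors (boxExamples E lo hi) lab T k := by
  rw [Qval, minErrors, ← sInf_image]
  congr 1
  ext x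
  simp only [prunings, boxExamples, Set.mem_ofPred_eq, Set.mem_image, ← exists_and_right, and_assoc,
    eq_comm (a := x)]

end Box

theorem stmt3_general {ι : Type} (E : Finset (ι → ℝ)) (lab : (ι → ℝ) → Label) :
    (∀ c : Label, minErrors E lab (.leaf c) 0 = ((E.filter fun e => lab e ≠ c).card : ℕ∞) ∧
      ∀ k : ℕ, 1 ≤ k → minErrors E lab (.leaf c) k = ⊤) ∧
    ∀ (f : ι) (t : ℝ) (u w : DTree ι) (k : ℕ),
      minErrors E lab (.node f t u w) k =
        min (minErrors E lab u (k - (w.innerCount + 1)))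
          (min (minErrors E lab w (k - (u.innerCount + 1)))
            ((Finset.range (k + 1)).inf fun j =>
              minErrors (E.filter fun e => e f ≤ t) lab u j +
                minErrors (E.filter fun e => t < e f) lab w (k - j))) := by
  refine ⟨fun c => ⟨minErrors_leaf_zero E lab c, fun _ hk => minErrors_eq_top hk⟩,
    fun f t u w k => ?_⟩
  simp only [minErrors, prunings_node, iInf_union, iInf_iUnion, iInf_image2_errCount_node,
    Finset.inf_eq_iInf]

/-- The dynamic programming recurrence for optimal subtree raising:
(i) at a leaf `v`, `Q[v,(ℓ,r),0]` is the number of examples of the box that disagree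
with the label of `v`, and `Q[v,(ℓ,r),k'] = ⊤` for `k' ≥ 1`;
(ii) at an inner node `v` with children `u`, `w`, `Q[v,(ℓ,r),k']` is the minimum of
`Q[u,(ℓ,r), k'∸(s_w+1)]`, `Q[w,(ℓ,r), k'∸(s_u+1)]`, and the minimum over
`0 ≤ k'' ≤ k'` of `Q[u,(ℓ,rᵘ),k''] + Q[w,(ℓʷ,r),k'-k'']`, where `rᵘ` and `ℓʷ`
update the coordinate `feat(v)` to `min (r feat(v)) thr(v)` and
`max (ℓ feat(v)) thr(v)`, respectively. -/
theorem stmt3 {d : ℕ} (E : Finset (Fin d → ℝ)) (lab : (Fin d → ℝ) → Label)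
    (T : DTree (Fin d)) (lo hi : Fin d → ℝ) (hbox : ∀ i, lo i ≤ hi i) :
    (∀ (v : List Bool) (c : Label), T.subtreeAt v = some (.leaf c) →
      Qval E lab (.leaf c) lo hi 0
        = ((E.filter fun e => (∀ i, lo i < e i ∧ e i ≤ hi i) ∧ lab e ≠ c).card : ℕ∞)
      ∧ ∀ k' : ℕ, 1 ≤ k' → Qval E lab (.leaf c) lo hi k' = ⊤)
    ∧ (∀ (v : List Bool) (f : Fin d) (t : ℝ) (u w : DTree (Fin d)) (k' : ℕ),
        T.subtreeAt v = some (.node f t u w) →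
        Qval E lab (.node f t u w) lo hi k'
          = min (Qval E lab u lo hi (k' - (w.innerCount + 1)))
              (min (Qval E lab w lo hi (k' - (u.innerCount + 1)))
                ((Finset.range (k' + 1)).inf fun k'' =>
                  Qval E lab u lo (Function.update hi f (min (hi f) t)) k''
                  + Qval E lab w (Function.update lo f (max (lo f) t)) hi (k' - k'')))) := by
  simp only [Qval_eq_minErrors, ← boxExamples_filter_le, ← boxExamples_filter_lt]
  obtain ⟨hleaf, hnode⟩ := stmt3_general (boxExamples E lo hi) lab
  refine ⟨fun _ c _ => ?_, fun _ f t u w k' _ => hnode f t u w k'⟩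
  simpa only [boxExamples, Finset.filter_filter] using hleaf c
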